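/- Let 0 < ℓ < m with gcd(ℓ,m) = 1 and n = ℓ + m. Then R = k[x^n, x^{n-ℓ} y^ℓ, x^{n-m} y^m, y^n] is Cohen–Macaulay if and only if m = ℓ + 1. In particular, k[x^4, x^3 y, x y^3, y^4] is not Cohen–Macaulay. -/

import Mathlib

open MvPolynomial

set_option synthInstance.maxHeartbeats 1000000
set_option maxHeartbeats 2000000

/-- Exponent semigroup of the ring. -/
def ExpS (l m p q : ℕ) : Prop :=
  ∃ a b c d : ℕ, p = a * (l + m) + b * m + c * l ∧ q = b * l + c * m + d * (l + m)

lemma expS_key (l m p q : ℕ) (hl : 0 < l) (hm : m = l + 1)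
    (h1 : ExpS l m (p + (l + m)) q) (h2 : ExpS l m p (q + (l + m))) : ExpS l m p q := by
  obtain ⟨a, b, c, d, e1, e2⟩ := h1
  obtain ⟨a', b', c', d', e3, e4⟩ := h2
  rcases Nat.eq_zero_or_pos a with ha | ha
  swap
  · obtain ⟨a, rfl⟩ : ∃ t, a = t + 1 := ⟨a - 1, by omega⟩
    exact ⟨a, b, c, d, by nlinarith, e2⟩
  rcases Nat.eq_zero_or_pos d' with hd | hd
  swap
  · obtain ⟨d', rfl⟩ : ∃ t, d' = t + 1 := ⟨d' - 1, by omega⟩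
    exact ⟨a', b', c', d', e3, by nlinarith⟩
  by_cases hbc : 0 < b ∧ 0 < c
  · obtain ⟨b, rfl⟩ : ∃ t, b = t + 1 := ⟨b - 1, by omega⟩
    obtain ⟨c, rfl⟩ : ∃ t, c = t + 1 := ⟨c - 1, by omega⟩
    exact ⟨a, b, c, d + 1, by nlinarith, by nlinarith⟩
  by_cases hbc' : 0 < b' ∧ 0 < c'
  · obtain ⟨b', rfl⟩ : ∃ t, b' = t + 1 := ⟨b' - 1, by omega⟩
    obtain ⟨c', rfl⟩ : ∃ t, c' = t + 1 := ⟨c' - 1, by omega⟩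
    exact ⟨a' + 1, b', c', d', by nlinarith, by nlinarith⟩
  subst ha hd
  have hb : b = 0 ∨ c = 0 := by omega
  have hb' : b' = 0 ∨ c' = 0 := by omega
  by_cases hbm : m ≤ b
  · obtain ⟨b, rfl⟩ : ∃ t, b = m + t := ⟨b - m, by omega⟩
    subst hm
    exact ⟨0, b, c + l, d, by nlinarith, by nlinarith⟩
  exfalso
  rcases hb with rfl | rfl <;> rcases hb' with rfl | rfl
  · have h1 : c * l > c' * l := by nlinarith
    have h2 : c' * m > c * m := by nlinarith
    have := lt_of_mul_lt_mul_right h1 (Nat.zero_le _)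
    have := lt_of_mul_lt_mul_right h2 (Nat.zero_le _)
    omega
  · have h1 : c * l > b' * m := by nlinarith
    have h2 : b' * l > c * m := by nlinarith
    subst hm
    nlinarith
  · have h3 : (b + c') * m = (l + m) * (a' + 1 + c') := by nlinarith
    have h4 : (b + c') * m = (l + m) * (d + 1 + b) := by nlinarith
    have hcop : Nat.Coprime (l + m) m := by
      subst hm
      have : Nat.Coprime l (l+1) := by simp
      simpa using this
    obtain ⟨t, ht⟩ := hcop.dvd_of_dvd_mul_right (Dvd.intro _ h3.symm)
    rw [ht, mul_assoc] at h3
    have h5 := Nat.eq_of_mul_eq_mul_left (by omega) h3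
    have ht0 : 0 < t := by
      rcases Nat.eq_zero_or_pos t with rfl | h
      · omega
      · exact h
    have : b ≥ t * l + 1 := by nlinarith
    have : l ≤ t * l := Nat.le_mul_of_pos_left _ ht0
    omega
  · have h1 : b * m > b' * m := by nlinarith
    have h2 : b' * l > b * l := by nlinarith
    have := lt_of_mul_lt_mul_right h1 (Nat.zero_le _)
    have := lt_of_mul_lt_mul_right h2 (Nat.zero_le _)
    omega

lemma expS_not (l m : ℕ) (hl : 0 < l) (hm : l + 2 ≤ m) (hg : Nat.gcd l m = 1) :
    ¬ ExpS l m ((m - 1) * l) ((l + 1) * l) := by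
  rintro ⟨a, b, c, d, e1, e2⟩
  obtain ⟨m, rfl⟩ : ∃ t, m = t + 1 := ⟨m - 1, by omega⟩
  simp only [Nat.add_sub_cancel] at e1
  have hs : (l + (m + 1)) * l = (l + (m + 1)) * (a + b + c + d) := by nlinarith
  have hs := Nat.eq_of_mul_eq_mul_left (by omega) hs
  have hd : (m + 1) ∣ (a + c + 1) * l := by
    have h : (m + 1) * l = (m + 1) * (a + b) + (a + c + 1) * l := by nlinarith
    exact (Nat.dvd_add_right (Dvd.intro _ rfl)).1 (Dvd.intro _ h)
  have := (Nat.Coprime.symm hg).dvd_of_dvd_mul_right hd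
  have := Nat.le_of_dvd (by omega) this
  omega

lemma mem_R_iff (k : Type*) [Field k] (l m n : ℕ) (hn : n = l + m)
    (f : MvPolynomial (Fin 2) k) :
    f ∈ Algebra.adjoin k
          ({X 0 ^ n, X 0 ^ (n - l) * X 1 ^ l, X 0 ^ (n - m) * X 1 ^ m, X 1 ^ n} :
            Set (MvPolynomial (Fin 2) k)) ↔
      ∀ e : Fin 2 →₀ ℕ, coeff e f ≠ 0 → ExpS l m (e 0) (e 1) := by
  have h1 : n - l = m := by omega
  have h2 : n - m = l := by omega
  rw [h1, h2]
  have key : ∀ i j : ℕ, (X 0 ^ i * X 1 ^ j : MvPolynomial (Fin 2) k)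
      = monomial (Finsupp.single 0 i + Finsupp.single 1 j) 1 := by
    intro i j
    simp [X_pow_eq_monomial, monomial_mul]
  have key2 : ∀ i j : ℕ, ExpS l m i j → ∀ e : Fin 2 →₀ ℕ,
      coeff e (X 0 ^ i * X 1 ^ j : MvPolynomial (Fin 2) k) ≠ 0 → ExpS l m (e 0) (e 1) := by
    intro i j h e he
    rw [key, coeff_monomial] at he
    have : Finsupp.single 0 i + Finsupp.single 1 j = e := by
      by_contra hh
      simp [hh] at he
    subst this
    simpa using h
  constructor
  · intro hf
    induction hf using Algebra.adjoin_induction with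
    | mem x hx =>
      simp only [Set.mem_insert_iff, Set.mem_singleton_iff] at hx
      rcases hx with rfl | rfl | rfl | rfl
      · simpa using key2 n 0 ⟨1, 0, 0, 0, by simp [hn], by simp⟩
      · exact key2 m l ⟨0, 1, 0, 0, by simp, by simp⟩
      · exact key2 l m ⟨0, 0, 1, 0, by simp, by simp⟩
      · simpa using key2 0 n ⟨0, 0, 0, 1, by simp, by simp [hn]⟩
    | algebraMap r =>
      intro e he
      rw [algebraMap_eq, coeff_C] at he
      have : 0 = e := by
        by_contra hh
        simp [hh] at he
      subst this
      exact ⟨0, 0, 0, 0, by simp, by simp⟩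
    | add x y _ _ hx hy =>
      intro e he
      by_cases h : coeff e x = 0
      · exact hy e (by simpa [h] using he)
      · exact hx e h
    | mul x y _ _ hx hy =>
      intro e he
      rw [coeff_mul] at he
      obtain ⟨⟨u, v⟩, huv, hne⟩ := Finset.exists_ne_zero_of_sum_ne_zero he
      rw [Finset.HasAntidiagonal.mem_antidiagonal] at huv
      simp only at huv hne
      obtain ⟨a, b, c, d, e1, e2⟩ := hx u (left_ne_zero_of_mul hne)
      obtain ⟨a', b', c', d', e3, e4⟩ := hy v (right_ne_zero_of_mul hne)
      subst huv
      refine ⟨a + a', b + b', c + c', d + d', ?_, ?_⟩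
      · simp only [Finsupp.add_apply, e1, e3]; ring
      · simp only [Finsupp.add_apply, e2, e4]; ring
  · intro h
    rw [f.as_sum]
    refine Subalgebra.sum_mem _ fun e he => ?_
    obtain ⟨a, b, c, d, e1, e2⟩ := h e (mem_support_iff.1 he)
    have : monomial e (coeff e f) = coeff e f • ((X 0 ^ n) ^ a * (X 0 ^ m * X 1 ^ l) ^ b *
        (X 0 ^ l * X 1 ^ m) ^ c * (X 1 ^ n) ^ d : MvPolynomial (Fin 2) k) := by
      have h3 : ((X 0 ^ n) ^ a * (X 0 ^ m * X 1 ^ l) ^ b *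
        (X 0 ^ l * X 1 ^ m) ^ c * (X 1 ^ n) ^ d : MvPolynomial (Fin 2) k)
          = X 0 ^ (e 0) * X 1 ^ (e 1) := by
        rw [e1, e2, hn]; ring
      have h4 : e = Finsupp.single 0 (e 0) + Finsupp.single 1 (e 1) := by
        ext i; fin_cases i <;> simp
      rw [h3, key, ← h4, smul_monomial, smul_eq_mul, mul_one]
    rw [this]
    refine Subalgebra.smul_mem _ ?_ _
    refine mul_mem (mul_mem (mul_mem ?_ ?_) ?_) ?_ <;>
    · refine pow_mem (Algebra.subset_adjoin ?_) _
      simp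

lemma weak_iff {R : Type*} [CommRing R] (x y : R) :
    RingTheory.Sequence.IsWeaklyRegular R [x, y] ↔
      IsSMulRegular R x ∧ ∀ f : R, x ∣ y * f → x ∣ f := by
  rw [RingTheory.Sequence.isWeaklyRegular_cons_iff,
    RingTheory.Sequence.isWeaklyRegular_singleton_iff]
  refine and_congr_right fun _ => ?_
  rw [show (IsSMulRegular (QuotSMulTop x R) y ↔ _) from
    isSMulRegular_quotient_iff_mem_of_smul_mem _ _]
  simp only [Submodule.mem_smul_pointwise_iff_exists, Submodule.mem_top, true_and, smul_eq_mul,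
    Dvd.dvd, eq_comm]

lemma main_iff (k : Type*) [Field k] (l m n : ℕ) (hl : 0 < l) (hlm : l < m)
    (hg : Nat.gcd l m = 1) (hn : n = l + m)
    (R : Subalgebra k (MvPolynomial (Fin 2) k))
    (hR : R = Algebra.adjoin k
          ({X 0 ^ n, X 0 ^ (n - l) * X 1 ^ l, X 0 ^ (n - m) * X 1 ^ m, X 1 ^ n} :
            Set (MvPolynomial (Fin 2) k)))
    (xn yn : R) (hx : (xn : MvPolynomial (Fin 2) k) = X 0 ^ n)
    (hy : (yn : MvPolynomial (Fin 2) k) = X 1 ^ n) :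
    RingTheory.Sequence.IsRegular R [xn, yn] ↔ m = l + 1 := by
  have hmem : ∀ f, f ∈ R ↔ ∀ e : Fin 2 →₀ ℕ, coeff e f ≠ 0 → ExpS l m (e 0) (e 1) := by
    intro f; rw [hR]; exact mem_R_iff k l m n hn f
  have hxne : (X 0 ^ n : MvPolynomial (Fin 2) k) ≠ 0 := pow_ne_zero _ (X_ne_zero _)
  have key : ∀ i j : ℕ, (X 0 ^ i * X 1 ^ j : MvPolynomial (Fin 2) k)
      = monomial (Finsupp.single 0 i + Finsupp.single 1 j) 1 := by
    intro i j
    simp [X_pow_eq_monomial, monomial_mul]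
  have hmon : ∀ i j : ℕ, (X 0 ^ i * X 1 ^ j : MvPolynomial (Fin 2) k) ∈ R ↔ ExpS l m i j := by
    intro i j
    rw [hmem, key]
    constructor
    · intro h
      have h' := h (Finsupp.single 0 i + Finsupp.single 1 j) (by simp)
      have t0 : ((Finsupp.single 0 i + Finsupp.single 1 j : Fin 2 →₀ ℕ)) 0 = i := by simp
      have t1 : ((Finsupp.single 0 i + Finsupp.single 1 j : Fin 2 →₀ ℕ)) 1 = j := by simp
      rwa [t0, t1] at h'
    · intro h e he
      rw [coeff_monomial] at he
      have : Finsupp.single 0 i + Finsupp.single 1 j = e := by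
        by_contra hh
        simp [hh] at he
      subst this
      simpa using h
  rw [RingTheory.Sequence.isRegular_iff, weak_iff]
  constructor
  · rintro ⟨⟨_, h⟩, _⟩
    by_contra hne
    have hm2 : l + 2 ≤ m := by omega
    have hpow : ∀ (s : ℕ) (f : R), xn ∣ yn ^ s * f → xn ∣ f := by
      intro s
      induction s with
      | zero => intro f hf; simpa using hf
      | succ s ih =>
        intro f hf
        refine ih f (h _ ?_)
        rwa [← mul_assoc, ← pow_succ']
    apply expS_not l m hl hm2 hg
    rw [← hmon]
    obtain ⟨r, rfl⟩ : ∃ r, m = l + 2 + r := ⟨m - (l + 2), by omega⟩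
    have hu : (X 0 ^ ((l + 1) * (l + 2 + r)) * X 1 ^ ((l + 1) * l) : MvPolynomial (Fin 2) k) ∈ R :=
      (hmon _ _).2 ⟨0, l + 1, 0, 0, by ring, by ring⟩
    have hv : (X 0 ^ ((l + 1 + r) * l) * X 1 ^ ((l + 1 + r) * (l + 2 + r)) :
        MvPolynomial (Fin 2) k) ∈ R :=
      (hmon _ _).2 ⟨0, 0, l + 1 + r, 0, by ring, by ring⟩
    obtain ⟨w, hw⟩ := hpow (r + 1) ⟨_, hu⟩ ⟨⟨_, hv⟩, by
      apply Subtype.ext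
      push_cast
      simp only [hx, hy, hn]
      ring⟩
    have hw' := congrArg (Subtype.val) hw
    push_cast at hw'
    rw [hx] at hw'
    have : (w : MvPolynomial (Fin 2) k) =
        X 0 ^ ((l + 2 + r - 1) * l) * X 1 ^ ((l + 1) * l) := by
      apply mul_left_cancel₀ hxne
      rw [← hw', hn, show l + 2 + r - 1 = l + 1 + r by omega]
      ring
    rw [← this]
    exact w.2
  · intro hm
    refine ⟨⟨?_, ?_⟩, ?_⟩
    · have : xn ≠ 0 := by
        intro h0
        rw [h0] at hx
        exact hxne hx.symm
      intro a b hab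
      exact mul_left_cancel₀ this hab
    · rintro f ⟨g, hfg⟩
      have hfg' := congrArg (Subtype.val) hfg
      push_cast at hfg'
      rw [hx, hy] at hfg'
      have hp : Prime (X 0 : MvPolynomial (Fin 2) k) := X_prime
      have hnd : ¬ (X 0 : MvPolynomial (Fin 2) k) ∣ X 1 ^ n := by
        intro hd
        have := hp.dvd_of_dvd_pow hd
        rw [X_dvd_X] at this
        exact absurd this (by decide)
      obtain ⟨h, hh⟩ := hp.pow_dvd_of_dvd_mul_left n hnd (Dvd.intro _ hfg'.symm)
      have hg' : (g : MvPolynomial (Fin 2) k) = X 1 ^ n * h := by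
        apply mul_left_cancel₀ hxne
        rw [← hfg', hh]; ring
      have hhR : h ∈ R := by
        rw [hmem]
        intro e he
        apply expS_key l m _ _ hl hm
        · have := (hmem _).1 f.2 (Finsupp.single 0 n + e) (by
            rw [hh, X_pow_eq_monomial, coeff_monomial_mul, one_mul]; exact he)
          simpa [hn, add_comm, add_left_comm] using this
        · have := (hmem _).1 g.2 (Finsupp.single 1 n + e) (by
            rw [hg', X_pow_eq_monomial, coeff_monomial_mul, one_mul]; exact he)
          simpa [hn, add_comm, add_left_comm] using this
      exact ⟨⟨h, hhR⟩, Subtype.ext (by push_cast; rw [hh, hx])⟩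
    · intro htop
      let φ : R →+* k := (constantCoeff : MvPolynomial (Fin 2) k →+* k).comp R.val.toRingHom
      have hle : Ideal.ofList [xn, yn] ≤ RingHom.ker φ := by
        rw [Ideal.ofList, Ideal.span_le]
        intro z hz
        have hn0 : n ≠ 0 := by omega
        simp only [List.mem_cons, List.not_mem_nil, or_false, Set.mem_ofPred_eq] at hz
        rcases hz with rfl | rfl
        · simp [φ, RingHom.mem_ker, hx, hn0]
        · simp [φ, RingHom.mem_ker, hy, hn0]
      have h1 : (1 : R) ∈ Ideal.ofList [xn, yn] • (⊤ : Submodule R R) := by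
        rw [← htop]; trivial
      have h2 := hle (by simpa using h1)
      rw [RingHom.mem_ker, map_one] at h2
      exact one_ne_zero h2

/-- Let `0 < ℓ < m` with `gcd(ℓ,m) = 1` and `n = ℓ + m`.  Then
`R = k[x^n, x^{n-ℓ}y^ℓ, x^{n-m}y^m, y^n]` is Cohen–Macaulay iff `m = ℓ + 1`.  In particular,
`k[x⁴, x³y, xy³, y⁴]` is not Cohen–Macaulay.  (Cohen–Macaulayness is equivalent to
`x^n, y^n` being a regular sequence on `R`.) -/
theorem stmt_19 (k : Type*) [Field k] :
    (∀ (l m n : ℕ), 0 < l → l < m → Nat.gcd l m = 1 → n = l + m →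
      ∀ (R : Subalgebra k (MvPolynomial (Fin 2) k)),
        R = Algebra.adjoin k
          ({X 0 ^ n, X 0 ^ (n - l) * X 1 ^ l, X 0 ^ (n - m) * X 1 ^ m, X 1 ^ n} :
            Set (MvPolynomial (Fin 2) k)) →
        ∀ (xn yn : R), (xn : MvPolynomial (Fin 2) k) = X 0 ^ n →
          (yn : MvPolynomial (Fin 2) k) = X 1 ^ n →
          (RingTheory.Sequence.IsRegular R [xn, yn] ↔ m = l + 1)) ∧
    (∀ (R : Subalgebra k (MvPolynomial (Fin 2) k)),
      R = Algebra.adjoin k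
        ({X 0 ^ 4, X 0 ^ 3 * X 1, X 0 * X 1 ^ 3, X 1 ^ 4} : Set (MvPolynomial (Fin 2) k)) →
      ∀ (x4 y4 : R), (x4 : MvPolynomial (Fin 2) k) = X 0 ^ 4 →
        (y4 : MvPolynomial (Fin 2) k) = X 1 ^ 4 →
        ¬ RingTheory.Sequence.IsRegular R [x4, y4]) := by
  refine ⟨fun l m n hl hlm hg hn R hR xn yn hx hy =>
    main_iff k l m n hl hlm hg hn R hR xn yn hx hy, ?_⟩
  intro R hR x4 y4 hx hy h
  have := (main_iff k 1 3 4 (by norm_num) (by norm_num) (by norm_num) (by norm_num) R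
    (by rw [hR]; simp) x4 y4 hx hy).1 h
  omega
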